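/- For every g ∈ O₇(𝔽₇), the conjugate g⁻¹·A₇·g does NOT vanish at all positions of P; that is, there exists a position (i,j) ∈ P with (g⁻¹·A₇·g)ᵢⱼ ≠ 0. -/

import Mathlib

open Matrix

/-- The 7×7 anti-diagonal identity matrix over `𝔽₇` (0-indexed: entry 1 iff `i + j = 6`). -/
def Jmat : Matrix (Fin 7) (Fin 7) (ZMod 7) :=
  fun i j => if (i : ℕ) + (j : ℕ) = 6 then 1 else 0

/-- The matrix `A₇ ∈ M₇(𝔽₇)` from Appendix A of the paper. -/
def A7 : Matrix (Fin 7) (Fin 7) (ZMod 7) :=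
  !![0,0,4,2,2,0,0;
     1,0,0,0,0,0,0;
     0,3,0,0,0,0,2;
     0,0,0,0,0,0,2;
     0,1,0,0,0,0,4;
     0,0,1,0,3,0,0;
     0,0,0,0,0,1,0]

/-- The set of matrix positions of Lemma 2.2 (0-indexed; in the paper's 1-indexed
convention these are (3,1),(4,1),(5,1),(5,2),(6,1),(6,2),(6,3),(7,1),(7,2),(7,3),(7,4),(7,5)). -/
def P : Set (Fin 7 × Fin 7) :=
  {(2,0),(3,0),(4,0),(4,1),(5,0),(5,1),(5,2),(6,0),(6,1),(6,2),(6,3),(6,4)}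

/-!
The rows of `eigenCoord` are left eigenvectors of `A₇`, one for each eigenvalue `a ∈ 𝔽₇`, and in
these coordinates the form becomes `-x₀² + ∑_{a ≠ 0} xₐ²`. Suppose `M = g⁻¹A₇g` vanishes on `P`, and
let `x` be the coordinate vector of the first column `v` of `g`. The shape of `M` gives
`⟨v, A₇ᵐv⟩ = (Mᵐ)₇₁ = 0` for `m ≤ 3`, while self-adjointness makes `⟨v, A₇⁴v⟩ = (M⁴)₇₁` a square.

These are power moments of the function `a ↦ ±xₐ²` on `𝔽₇`, so this function is a polynomial `f` of
degree at most `2` whose coefficient of `X²` is minus a square, with `f(a)` a square for `a ≠ 0` and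
`f(0)` minus a square. Cubes of squares are `0` or `1`, so comparing `∑ₐ f(a)³` with
`-(coefficient of X²)³` shows that the number of `a ≠ 0` with `f(a) ≠ 0` is congruent to `0`, `1` or
`2` modulo `7`. A non-zero `f` has at most two roots, so that number would lie between `4` and `6`;
thus `f = 0` and `v = 0`, which is absurd.
-/

section FiniteField

open Polynomial

variable {K : Type*} [Field K] [Fintype K]

theorem sum_pow_add_card_sub_one {j : ℕ} (hj : j < Fintype.card K - 1) :
    ∑ x : K, x ^ (j + (Fintype.card K - 1)) = -0 ^ j := by
  classical
  have pow_eq (x : K) :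
      x ^ (j + (Fintype.card K - 1)) = x ^ j - if x = 0 then x ^ j else 0 := by
    by_cases hx : x = 0
    · simp [hx, (Nat.zero_le j).trans_lt hj |>.ne']
    · simp [hx, pow_add, FiniteField.pow_card_sub_one_eq_one x hx]
  simp [pow_eq, FiniteField.sum_pow_lt_card_sub_one K j hj]

theorem sum_pow_eq_ite {i : ℕ} (hi : i < 2 * (Fintype.card K - 1)) :
    ∑ x : K, x ^ i = if i = Fintype.card K - 1 then -1 else 0 := by
  rcases lt_or_ge i (Fintype.card K - 1) with hlt | hge
  · rw [FiniteField.sum_pow_lt_card_sub_one K i hlt, if_neg hlt.ne]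
  · obtain ⟨j, rfl⟩ := Nat.exists_eq_add_of_le' hge
    rw [sum_pow_add_card_sub_one (by lia)]
    by_cases hj : j = 0 <;> simp [hj]

theorem sum_eval_eq_neg_coeff_card_sub_one {f : K[X]}
    (hf : f.natDegree < 2 * (Fintype.card K - 1)) :
    ∑ x, f.eval x = -f.coeff (Fintype.card K - 1) := by
  calc ∑ x, f.eval x
      = ∑ i ∈ Finset.range (2 * (Fintype.card K - 1)), f.coeff i * ∑ x : K, x ^ i := by
        simp only [eval_eq_sum_range' hf, Finset.mul_sum]
        exact Finset.sum_comm
    _ = ∑ i ∈ Finset.range (2 * (Fintype.card K - 1)),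
          f.coeff i * if i = Fintype.card K - 1 then -1 else 0 :=
        Finset.sum_congr rfl fun i hi => by rw [sum_pow_eq_ite (Finset.mem_range.mp hi)]
    _ = -f.coeff (Fintype.card K - 1) := by
        have card_pred_pos : 0 < Fintype.card K - 1 := Nat.sub_pos_of_lt Fintype.one_lt_card
        simp [show Fintype.card K - 1 < 2 * (Fintype.card K - 1) by lia]

theorem sum_pow_mul_eval_eq_neg_coeff {f : K[X]} {m : ℕ} (hf : f.natDegree < Fintype.card K)
    (hm : m < Fintype.card K - 1) :
    ∑ x, x ^ m * f.eval x = -f.coeff (Fintype.card K - 1 - m) := by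
  have natDegree_lt : (X ^ m * f).natDegree < 2 * (Fintype.card K - 1) := by
    have natDegree_le : (X ^ m * f).natDegree ≤ m + f.natDegree :=
      natDegree_mul_le_of_le (natDegree_X_pow_le m) le_rfl
    lia
  simpa [coeff_X_pow_mul', hm.le] using sum_eval_eq_neg_coeff_card_sub_one natDegree_lt

theorem exists_polynomial_of_sum_pow_mul_eq_zero {w : K → K} {n : ℕ} (hn : n < Fintype.card K)
    (hw : ∀ m < n, ∑ x, x ^ m * w x = 0) :
    ∃ f : K[X], f.natDegree < Fintype.card K - n ∧ ∀ x, f.eval x = w x := by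
  classical
  let f := Lagrange.interpolate Finset.univ id w
  have eval_f (x : K) : f.eval x = w x :=
    Lagrange.eval_interpolate_at_node w Function.injective_id.injOn (Finset.mem_univ x)
  have natDegree_f : f.natDegree < Fintype.card K := by
    rcases eq_or_ne f 0 with hf | hf
    · simp [hf, Fintype.card_pos]
    · rw [natDegree_lt_iff_degree_lt hf]
      exact Lagrange.degree_interpolate_lt w Function.injective_id.injOn
  refine ⟨f, ?_, eval_f⟩
  rw [Nat.lt_iff_le_pred (by lia), natDegree_le_iff_coeff_eq_zero]
  intro k hk
  by_cases hkq : k < Fintype.card K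
  · have coeff_eq :=
      sum_pow_mul_eval_eq_neg_coeff (m := Fintype.card K - 1 - k) natDegree_f (by lia)
    rw [Nat.sub_sub_self (by lia)] at coeff_eq
    simpa [eval_f, hw (Fintype.card K - 1 - k) (by lia)] using coeff_eq
  · exact coeff_eq_zero_of_natDegree_lt (by lia)

theorem card_le_card_filter_eval_ne_zero_add_natDegree {R : Type*} [CommRing R] [IsDomain R]
    [DecidableEq R] {f : R[X]} (hf : f ≠ 0) (s : Finset R) :
    s.card ≤ {a ∈ s | f.eval a ≠ 0}.card + f.natDegree := by
  have card_roots_le : {a ∈ s | f.eval a = 0}.card ≤ f.natDegree :=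
    card_le_degree_of_subset_roots fun a ha => by
      simpa [hf] using (Finset.mem_filter.mp ha).2
  calc s.card
      = {a ∈ s | f.eval a = 0}.card + {a ∈ s | f.eval a ≠ 0}.card :=
        (Finset.card_filter_add_card_filter_not _).symm
    _ ≤ {a ∈ s | f.eval a ≠ 0}.card + f.natDegree := by lia

/-- The value of the diagonalized form on the `a`-th basis vector: it represents the form
`-x₀² + ∑_{a ≠ 0} xₐ²` on functions `ZMod p → ZMod p`. -/
def diagSign {p : ℕ} (a : ZMod p) : ZMod p := if a = 0 then -1 else 1

variable {p : ℕ} [Fact p.Prime]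

theorem pow_half_eq_ite_of_isSquare {y : ZMod p} (hy : IsSquare y) :
    y ^ (p / 2) = if y = 0 then 0 else 1 := by
  have half_ne_zero : p / 2 ≠ 0 := (Nat.div_pos (Fact.out : p.Prime).two_le two_pos).ne'
  split_ifs with h
  · rw [h, zero_pow half_ne_zero]
  · exact (ZMod.euler_criterion p h).mp hy

theorem natCast_card_filter_eval_ne_zero (hp : p % 4 = 3) {f : (ZMod p)[X]}
    (hdeg : f.natDegree ≤ 2) (hsq : ∀ a ≠ 0, IsSquare (f.eval a)) :
    ({a ∈ Finset.univ.erase (0 : ZMod p) | f.eval a ≠ 0}.card : ZMod p) =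
      (-f.eval 0) ^ (p / 2) + (-f.coeff 2) ^ (p / 2) := by
  have odd_half : Odd (p / 2) := Nat.odd_iff.mpr (by lia)
  have sum_univ : ∑ a, f.eval a ^ (p / 2) = -f.coeff 2 ^ (p / 2) := by
    have natDegree_pow : (f ^ (p / 2)).natDegree ≤ p / 2 * 2 := natDegree_pow_le_of_le _ hdeg
    have sum_eval_pow :=
      sum_eval_eq_neg_coeff_card_sub_one (f := f ^ (p / 2)) (by rw [ZMod.card]; lia)
    rwa [ZMod.card, show p - 1 = p / 2 * 2 by lia, coeff_pow_of_natDegree_le hdeg,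
      Finset.sum_congr rfl fun a _ => eval_pow (p / 2)] at sum_eval_pow
  calc ({a ∈ Finset.univ.erase (0 : ZMod p) | f.eval a ≠ 0}.card : ZMod p)
      = ∑ a ∈ Finset.univ.erase 0, f.eval a ^ (p / 2) := by
        rw [Finset.card_filter, Nat.cast_sum]
        refine Finset.sum_congr rfl fun a ha => ?_
        rw [pow_half_eq_ite_of_isSquare (hsq a (Finset.ne_of_mem_erase ha))]
        simp
    _ = -f.eval 0 ^ (p / 2) + ∑ a, f.eval a ^ (p / 2) := by
        rw [← Finset.add_sum_erase _ _ (Finset.mem_univ 0), neg_add_cancel_left]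
    _ = (-f.eval 0) ^ (p / 2) + (-f.coeff 2) ^ (p / 2) := by
        rw [sum_univ, odd_half.neg_pow, odd_half.neg_pow]

theorem eq_zero_of_isSquare_eval (hp : p % 4 = 3) (hp3 : 3 < p) {f : (ZMod p)[X]}
    (hdeg : f.natDegree ≤ 2) (hcoeff : IsSquare (-f.coeff 2)) (hzero : IsSquare (-f.eval 0))
    (hne : ∀ a ≠ 0, IsSquare (f.eval a)) : f = 0 := by
  by_contra hf
  let S : Finset (ZMod p) := {a ∈ Finset.univ.erase 0 | f.eval a ≠ 0}
  obtain ⟨e, e_le, card_eq_e⟩ : ∃ e ≤ 2, (S.card : ZMod p) = (e : ℕ) := by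
    rw [natCast_card_filter_eval_ne_zero hp hdeg hne, pow_half_eq_ite_of_isSquare hzero,
      pow_half_eq_ite_of_isSquare hcoeff]
    refine ⟨(if -f.eval 0 = 0 then 0 else 1) + if -f.coeff 2 = 0 then 0 else 1, ?_, ?_⟩
    · split_ifs <;> simp
    · push_cast; rfl
  have card_erase : (Finset.univ.erase (0 : ZMod p)).card = p - 1 := by
    rw [Finset.card_erase_of_mem (Finset.mem_univ 0), Finset.card_univ, ZMod.card]
  have card_le : S.card ≤ p - 1 := card_erase ▸ Finset.card_filter_le _ _
  have le_card := card_le_card_filter_eval_ne_zero_add_natDegree hf (Finset.univ.erase 0)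
  rw [ZMod.natCast_eq_natCast_iff', Nat.mod_eq_of_lt (by lia), Nat.mod_eq_of_lt (by lia)]
    at card_eq_e
  lia

theorem eq_zero_of_moments_diagSign (hp : p % 4 = 3) (hp3 : 3 < p) {x : ZMod p → ZMod p}
    (hzero : ∀ m < p - 3, ∑ a, a ^ m * (diagSign a * x a ^ 2) = 0)
    (hsq : IsSquare (∑ a, a ^ (p - 3) * (diagSign a * x a ^ 2))) : x = 0 := by
  obtain ⟨f, natDegree_f, eval_f⟩ :=
    exists_polynomial_of_sum_pow_mul_eq_zero (by rw [ZMod.card]; lia) hzero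
  rw [ZMod.card] at natDegree_f
  have coeff_two : -f.coeff 2 = ∑ a, a ^ (p - 3) * (diagSign a * x a ^ 2) := by
    have moment_eq := sum_pow_mul_eval_eq_neg_coeff (f := f) (m := p - 3) (by rw [ZMod.card]; lia)
      (by rw [ZMod.card]; lia)
    rw [ZMod.card, show p - 1 - (p - 3) = 2 by lia] at moment_eq
    simp only [← moment_eq, eval_f]
  have f_eq_zero : f = 0 := by
    refine eq_zero_of_isSquare_eval hp hp3 (by lia) (coeff_two ▸ hsq) ?_ fun a ha => ?_
    · simp [eval_f, diagSign, IsSquare.sq]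
    · simp [eval_f, diagSign, ha, IsSquare.sq]
  funext a
  have sign_mul_sq : diagSign a * x a ^ 2 = 0 := by rw [← eval_f, f_eq_zero, eval_zero]
  have sign_ne_zero : diagSign a ≠ 0 := by unfold diagSign; split_ifs <;> simp
  simpa [sign_ne_zero] using sign_mul_sq

end FiniteField

section VanishingOnP

variable {R : Type*} [CommRing R] {M : Matrix (Fin 7) (Fin 7) R}

theorem pow_apply_six_zero_eq_zero_of_vanish_on_P (hM : ∀ q ∈ P, M q.1 q.2 = 0) {m : ℕ}
    (hm : m < 4) : (M ^ m) 6 0 = 0 := by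
  simp only [P, Set.mem_insert_iff, Set.mem_singleton_iff, forall_eq_or_imp, forall_eq] at hM
  interval_cases m <;> simp [pow_succ, Matrix.mul_apply, Fin.sum_univ_seven, hM]

theorem pow_four_apply_six_zero_of_vanish_on_P (hM : ∀ q ∈ P, M q.1 q.2 = 0) :
    (M ^ 4) 6 0 = (M ^ 2) 6 3 * (M ^ 2) 3 0 := by
  simp only [P, Set.mem_insert_iff, Set.mem_singleton_iff, forall_eq_or_imp, forall_eq] at hM
  have row_six : ∀ j < 3, (M ^ 2) 6 j = 0 := by
    intro j hj
    fin_cases j <;> simp_all [pow_two, Matrix.mul_apply, Fin.sum_univ_seven]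
  have column_zero : ∀ i > 3, (M ^ 2) i 0 = 0 := by
    intro i hi
    fin_cases i <;> simp_all [pow_two, Matrix.mul_apply, Fin.sum_univ_seven]
  rw [show 4 = 2 + 2 from rfl, pow_add, Matrix.mul_apply]
  refine Finset.sum_eq_single 3 (fun k _ hk => ?_) (by simp)
  rcases lt_or_gt_of_ne hk with hlt | hgt
  · rw [row_six k hlt, zero_mul]
  · rw [column_zero k hgt, mul_zero]

end VanishingOnP

section Isometry

variable {n R : Type*} [Fintype n] [DecidableEq n] [CommRing R] {g A M J : Matrix n n R}

theorem isUnit_det_of_transpose_mul_mul (hJ : IsUnit J.det) (hg : gᵀ * J * g = J) :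
    IsUnit g.det :=
  isUnit_of_mul_isUnit_right (by rwa [← det_mul, hg] : IsUnit ((gᵀ * J).det * g.det))

theorem semiconjBy_inv_mul_mul (hg : IsUnit g.det) : SemiconjBy g (g⁻¹ * A * g) A := by
  rw [SemiconjBy, Matrix.mul_assoc, mul_nonsing_inv_cancel_left _ _ hg]

theorem transpose_mul_mul_pow_mul (hg : gᵀ * J * g = J) (hM : SemiconjBy g M A) (m : ℕ) :
    gᵀ * (J * A ^ m) * g = J * M ^ m := by
  rw [← Matrix.mul_assoc, Matrix.mul_assoc, ← (hM.pow_right m).eq, ← Matrix.mul_assoc, hg]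

end Isometry

theorem Jmat_mul_apply (N : Matrix (Fin 7) (Fin 7) (ZMod 7)) (i j : Fin 7) :
    (Jmat * N) i j = N i.rev j := by
  have Jmat_apply (k : Fin 7) : Jmat i k = if k = i.rev then 1 else 0 :=
    if_congr (by rw [Fin.ext_iff, Fin.val_rev]; lia) rfl rfl
  simp [Matrix.mul_apply, Jmat_apply]

theorem isUnit_det_Jmat : IsUnit Jmat.det :=
  isUnit_det_of_left_inverse (B := Jmat) (by decide)

/-- The matrix sending a vector to its coordinates in an orthogonal eigenbasis of `A7`. Row `a`,
indexed by the eigenvalue `a`, is a left eigenvector, scaled so that the form becomes `diagSign`.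
Rows are listed in the order `a = 0, …, 6`, `ZMod 7` being `Fin 7` by definition. -/
def eigenCoord : Matrix (ZMod 7) (Fin 7) (ZMod 7) :=
  !![0,0,5,4,6,0,0;
     6,6,4,5,1,1,1;
     5,3,4,5,1,2,4;
     4,5,2,5,2,4,5;
     4,2,3,2,6,3,5;
     5,4,5,2,5,5,4;
     6,1,5,2,5,6,1]

theorem eigenCoord_mul_A7 :
    eigenCoord * A7 = diagonal (id : ZMod 7 → ZMod 7) * eigenCoord := by decide

theorem eigenCoord_mul_A7_pow (m : ℕ) :
    eigenCoord * A7 ^ m = diagonal (fun a : ZMod 7 => a ^ m) * eigenCoord := by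
  induction m with
  | zero => simp
  | succ m ih =>
    rw [pow_succ, ← Matrix.mul_assoc, ih, Matrix.mul_assoc, eigenCoord_mul_A7,
      ← Matrix.mul_assoc, diagonal_mul_diagonal]
    simp only [id, pow_succ]

theorem transpose_eigenCoord_mul_diagonal_mul :
    eigenCoordᵀ * diagonal (diagSign (p := 7)) * eigenCoord = Jmat := by decide

theorem Jmat_mul_A7_pow (m : ℕ) :
    Jmat * A7 ^ m =
      eigenCoordᵀ * diagonal (fun a : ZMod 7 => a ^ m * diagSign a) * eigenCoord := by
  calc Jmat * A7 ^ m
      = eigenCoordᵀ * diagonal (diagSign (p := 7)) * (eigenCoord * A7 ^ m) := by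
        rw [← transpose_eigenCoord_mul_diagonal_mul, Matrix.mul_assoc]
    _ = eigenCoordᵀ * (diagonal (diagSign (p := 7)) * diagonal fun a : ZMod 7 => a ^ m) *
          eigenCoord := by
        simp only [eigenCoord_mul_A7_pow, Matrix.mul_assoc]
    _ = _ := by simp only [diagonal_mul_diagonal, mul_comm]

section ConjugateOfA7

variable {g M : Matrix (Fin 7) (Fin 7) (ZMod 7)}

theorem conj_A7_pow_apply_rev (hg : gᵀ * Jmat * g = Jmat) (hM : SemiconjBy g M A7) (m : ℕ)
    (i j : Fin 7) :
    (M ^ m) i.rev j =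
      ∑ a, a ^ m * (diagSign a * ((eigenCoord * g) a i * (eigenCoord * g) a j)) := by
  have factor : Jmat * M ^ m =
      (eigenCoord * g)ᵀ * diagonal (fun a : ZMod 7 => a ^ m * diagSign a) * (eigenCoord * g) := by
    rw [← transpose_mul_mul_pow_mul hg hM, Jmat_mul_A7_pow, Matrix.transpose_mul]
    simp only [Matrix.mul_assoc]
  rw [← Jmat_mul_apply (M ^ m), factor, Matrix.mul_apply]
  refine Finset.sum_congr rfl fun a _ => ?_
  rw [Matrix.mul_diagonal, Matrix.transpose_apply]
  ring

theorem conj_A7_pow_apply_rev_comm (hg : gᵀ * Jmat * g = Jmat) (hM : SemiconjBy g M A7) (m : ℕ)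
    (i j : Fin 7) : (M ^ m) i.rev j = (M ^ m) j.rev i := by
  simp only [conj_A7_pow_apply_rev hg hM, mul_comm ((eigenCoord * g) _ i)]

end ConjugateOfA7

/-- The `p = 7` analogue of Lemma 2.2: for every `g ∈ O₇(𝔽₇)`, the conjugate
`g⁻¹·A₇·g` does not vanish at all positions of `P`. -/
theorem stmt12 (g : Matrix (Fin 7) (Fin 7) (ZMod 7)) (hg : gᵀ * Jmat * g = Jmat) :
    ∃ p ∈ P, (g⁻¹ * A7 * g) p.1 p.2 ≠ 0 := by
  have : Fact (Nat.Prime 7) := ⟨by norm_num⟩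
  by_contra! vanish
  set M := g⁻¹ * A7 * g
  have conj : SemiconjBy g M A7 :=
    semiconjBy_inv_mul_mul (isUnit_det_of_transpose_mul_mul isUnit_det_Jmat hg)
  have moment (m : ℕ) : ∑ a, a ^ m * (diagSign a * (eigenCoord * g) a 0 ^ 2) = (M ^ m) 6 0 := by
    simp only [sq]
    exact (conj_A7_pow_apply_rev hg conj m 0 0).symm
  have moment_four_eq_sq : (M ^ 4) 6 0 = (M ^ 2) 3 0 * (M ^ 2) 3 0 := by
    have symm_entry : (M ^ 2) 6 3 = (M ^ 2) 3 0 := conj_A7_pow_apply_rev_comm hg conj 2 0 3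
    rw [pow_four_apply_six_zero_of_vanish_on_P vanish, symm_entry]
  have first_column : (fun a => (eigenCoord * g) a 0) = 0 := by
    refine eq_zero_of_moments_diagSign (by norm_num) (by norm_num) (fun m hm => ?_) ?_
    · rw [moment, pow_apply_six_zero_eq_zero_of_vanish_on_P vanish hm]
    · exact ⟨(M ^ 2) 3 0, by rw [moment, moment_four_eq_sq]⟩
  have pairing_first_last_eq_zero : (1 : Matrix (Fin 7) (Fin 7) (ZMod 7)) 6 6 = 0 := by
    simpa [congrFun first_column] using conj_A7_pow_apply_rev hg conj 0 0 6
  simp at pairing_first_last_eq_zero
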